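/- Let α = ℓ c̄^{m1} c^{m2} ∈ D (so 1 + m1 + m2 ≤ 2^(2^n)). If γ = ℓ c^{r1} c̄^{r2} for some r1, r2 ∈ ℕ and α + γ ∈ ⟨𝓕⟩, then γ = α; that is, the set of monomials γ with α + γ ∈ ⟨𝓕⟩ meets {ℓ c^{r1} c̄^{r2} : r1, r2 ∈ ℕ} exactly in {α}. -/

import Mathlib

open MvPolynomial

/-- Monomials in the variables `σ`, represented by their exponent vectors. -/
abbrev Mon (σ : Type*) := σ →₀ ℕ

/-- A monomial order: a total order on monomials such that `1 ≼ t` for every monomial `t`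
and `t ≼ u → t·v ≼ u·v` (written additively on exponent vectors). -/
structure MonOrd (σ : Type*) where
  le : Mon σ → Mon σ → Prop
  le_refl : ∀ t, le t t
  le_trans : ∀ t u v, le t u → le u v → le t v
  le_antisymm : ∀ t u, le t u → le u t → t = u
  le_total : ∀ t u, le t u ∨ le u t
  zero_le : ∀ t, le 0 t
  add_le_add : ∀ t u v, le t u → le (t + v) (u + v)

/-- Strict version of a monomial order. -/
def MonOrd.lt {σ : Type*} (μ : MonOrd σ) (t u : Mon σ) : Prop := μ.le t u ∧ t ≠ u

/-- The extension of a monomial order (given by the relation `r` on monomials) to polynomials: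
`g ≼ f` iff `g = f` or the greatest monomial on which `f` and `g` differ occurs in `f`.
(This is the closed form of the recursive definition: `g ≼ f` iff `g = f`, or
`HT g ≺ HT f`, or `HT g = HT f` and `g - HT g ≼ f - HT f`, with `0` the least polynomial.) -/
def polyLe {σ : Type*} (r : Mon σ → Mon σ → Prop) (g f : MvPolynomial σ (ZMod 2)) : Prop :=
  g = f ∨ ∃ t, t ∈ f.support ∧ t ∉ g.support ∧
    ∀ u : Mon σ, ((u ∈ f.support ∧ u ∉ g.support) ∨ (u ∈ g.support ∧ u ∉ f.support)) → r u t

/-- Strict extension of a monomial order to polynomials. -/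
def polyLt {σ : Type*} (r : Mon σ → Mon σ → Prop) (g f : MvPolynomial σ (ZMod 2)) : Prop :=
  polyLe r g f ∧ g ≠ f

/-- `S_F`: the set of non-residual polynomials with respect to `F` and the monomial order `r`,
i.e. those `f` admitting a `g` with `f + g ∈ ⟨F⟩` and `g ≺ f`. -/
def SF {σ : Type*} (r : Mon σ → Mon σ → Prop) (F : Set (MvPolynomial σ (ZMod 2))) :
    Set (MvPolynomial σ (ZMod 2)) :=
  {f | ∃ g, f + g ∈ Ideal.span F ∧ polyLt r g f}

/-- `t` is the head monomial (`r`-greatest monomial) of the polynomial `f`. -/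
def IsHT {σ : Type*} (r : Mon σ → Mon σ → Prop) (f : MvPolynomial σ (ZMod 2)) (t : Mon σ) :
    Prop :=
  t ∈ f.support ∧ ∀ u ∈ f.support, r u t

/-- `HT(S)`: the set of head monomials (as polynomials) of the nonzero elements of `S`. -/
def HTset {σ : Type*} (r : Mon σ → Mon σ → Prop) (S : Set (MvPolynomial σ (ZMod 2))) :
    Set (MvPolynomial σ (ZMod 2)) :=
  {p | ∃ f ∈ S, f ≠ 0 ∧ ∃ t, IsHT r f t ∧ p = monomial t 1}

/-- The divisibility (componentwise) order `◁` on monomials. -/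
def triMon {σ : Type*} (t u : Mon σ) : Prop := ∀ x, t x ≤ u x

/-- The order `◁` on polynomials: `p ◁ q` iff there is an injective map `φ` from the
monomials of `p` to the monomials of `q` with `t ◁ φ t` for each monomial `t` of `p`. -/
def triPoly {σ : Type*} (p q : MvPolynomial σ (ZMod 2)) : Prop :=
  ∃ φ : Mon σ → Mon σ, Set.InjOn φ ↑p.support ∧ ∀ t ∈ p.support, φ t ∈ q.support ∧ triMon t (φ t)

/-- Upward closure with respect to `◁`. -/
def upClo {σ : Type*} (A : Set (MvPolynomial σ (ZMod 2))) : Set (MvPolynomial σ (ZMod 2)) :=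
  {q | ∃ p ∈ A, triPoly p q}

/-- `Min_◁(A)`: the `◁`-minimal elements of `A`. -/
def minTri {σ : Type*} (A : Set (MvPolynomial σ (ZMod 2))) : Set (MvPolynomial σ (ZMod 2)) :=
  {p | p ∈ A ∧ ∀ q ∈ A, triPoly q p → q = p}

/-- `G` is a Gröbner basis of the ideal `I` with respect to the monomial order `r`. -/
def IsGB {σ : Type*} (r : Mon σ → Mon σ → Prop) (G : Finset (MvPolynomial σ (ZMod 2)))
    (I : Ideal (MvPolynomial σ (ZMod 2))) : Prop :=
  (↑G : Set (MvPolynomial σ (ZMod 2))) ⊆ ↑I ∧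
    Ideal.span (↑G : Set (MvPolynomial σ (ZMod 2))) = I ∧
    Ideal.span (HTset r (↑I : Set (MvPolynomial σ (ZMod 2)))) = Ideal.span (HTset r ↑G)

/-- `G` is a reduced Gröbner basis of `I` with respect to `r`. -/
def IsReducedGB {σ : Type*} (r : Mon σ → Mon σ → Prop) (G : Finset (MvPolynomial σ (ZMod 2)))
    (I : Ideal (MvPolynomial σ (ZMod 2))) : Prop :=
  IsGB r G I ∧ ∀ f ∈ G, ¬ ∀ t ∈ f.support,
    (monomial t 1 : MvPolynomial σ (ZMod 2)) ∈
      Ideal.span (HTset r ((↑G : Set (MvPolynomial σ (ZMod 2))) \ {f}))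

/-- The variable set `X`: the special variables `s, ℓ, c, c̄, b, b̄` together with, for each
`0 ≤ i ≤ n`, the variables `s_i, f_i, q_{ji}, c_{ji}, b_{ji}` (`1 ≤ j ≤ 4`, encoded by
`j : Fin 4`) and their barred copies (`bar = true`). -/
inductive MVar (n : ℕ) : Type where
  | vs | vl | vc | vcb | vb | vbb
  | vS (bar : Bool) (i : Fin (n+1))
  | vF (bar : Bool) (i : Fin (n+1))
  | vQ (bar : Bool) (j : Fin 4) (i : Fin (n+1))
  | vC (bar : Bool) (j : Fin 4) (i : Fin (n+1))
  | vB (bar : Bool) (j : Fin 4) (i : Fin (n+1))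
deriving DecidableEq

open MVar

abbrev MPoly (n : ℕ) := MvPolynomial (MVar n) (ZMod 2)

/-- `e(n) = 2^(2^n)`. -/
def en (n : ℕ) : ℕ := 2 ^ 2 ^ n

/-- The set `P_0` (barred copy if `bar = true`). -/
def P0 (n : ℕ) (bar : Bool) : Set (MPoly n) :=
  {p | ∃ j : Fin 4, p =
    X (vB bar j 0) ^ 2 * X (vC bar j 0) * X (vF bar 0) + X (vC bar j 0) * X (vS bar 0)}

/-- The set `P_m` for `m = i+1`, `i : Fin n` (barred copy if `bar = true`).
Here `i.succ` plays the role of `m` and `i.castSucc` the role of `m-1`; the indices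
`1,2,3,4` of the paper are encoded as `0,1,2,3 : Fin 4`. -/
def Pm (n : ℕ) (bar : Bool) (i : Fin n) : Set (MPoly n) :=
  ({ X (vQ bar 0 i.succ) * X (vC bar 0 i.castSucc) * X (vS bar i.castSucc) + X (vS bar i.succ),
    X (vQ bar 1 i.succ) * X (vC bar 1 i.castSucc) * X (vS bar i.castSucc)
      + X (vQ bar 0 i.succ) * X (vB bar 0 i.castSucc) * X (vC bar 0 i.castSucc)
        * X (vF bar i.castSucc),
    X (vQ bar 2 i.succ) * X (vC bar 2 i.castSucc) * X (vF bar i.castSucc)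
      + X (vQ bar 1 i.succ) * X (vC bar 1 i.castSucc) * X (vF bar i.castSucc),
    X (vQ bar 2 i.succ) * X (vB bar 0 i.castSucc) * X (vC bar 2 i.castSucc)
        * X (vS bar i.castSucc)
      + X (vQ bar 1 i.succ) * X (vB bar 3 i.castSucc) * X (vC bar 1 i.castSucc)
        * X (vS bar i.castSucc),
    X (vQ bar 3 i.succ) * X (vB bar 3 i.castSucc) * X (vC bar 3 i.castSucc)
        * X (vF bar i.castSucc)
      + X (vQ bar 2 i.succ) * X (vC bar 2 i.castSucc) * X (vS bar i.castSucc),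
    X (vQ bar 3 i.succ) * X (vC bar 3 i.castSucc) * X (vS bar i.castSucc)
      + X (vF bar i.succ) } : Set (MPoly n))
  ∪ {p | ∃ j : Fin 4, p =
      X (vQ bar 1 i.succ) * X (vB bar 2 i.castSucc) * X (vB bar j i.succ) * X (vC bar j i.succ)
          * X (vF bar i.castSucc)
        + X (vQ bar 1 i.succ) * X (vB bar 1 i.castSucc) * X (vC bar j i.succ)
          * X (vF bar i.castSucc)}

/-- The set `P = P_0 ∪ P_1 ∪ ⋯ ∪ P_n`; for `bar = true` this is the barred copy `P̄`
(the image of `P` under the substitution replacing each variable by its barred version). -/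
def PP (n : ℕ) (bar : Bool) : Set (MPoly n) := P0 n bar ∪ ⋃ i : Fin n, Pm n bar i

/-- The set `G` of seven extra binomials. -/
def GG (n : ℕ) : Set (MPoly n) :=
  { X (vB false 3 (Fin.last n)) * X vl * X vb + X vl * X vc,
    X (vB false 3 (Fin.last n)) * X vl * X vbb + X vl * X vcb,
    X (vC false 3 (Fin.last n)) * X (vF false (Fin.last n)) + X vl,
    X (vC true 3 (Fin.last n)) * X (vF true (Fin.last n))
      + X (vC false 3 (Fin.last n)) * X (vS false (Fin.last n)),
    X (vB true 3 (Fin.last n)) * X (vC false 3 (Fin.last n)) * X (vS false (Fin.last n))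
      + X (vC false 3 (Fin.last n)) * X (vS false (Fin.last n)) * X vb,
    X (vB true 3 (Fin.last n)) * X (vC false 3 (Fin.last n)) * X (vS false (Fin.last n))
      + X (vC false 3 (Fin.last n)) * X (vS false (Fin.last n)) * X vbb,
    X (vC true 3 (Fin.last n)) * X (vS true (Fin.last n)) + X vs }

/-- The set `𝓕 = P ∪ P̄ ∪ G`. -/
def FF (n : ℕ) : Set (MPoly n) := PP n false ∪ PP n true ∪ GG n

/-- The set `C = {ℓ c̄^{m1} c^{m2} : m1 + m2 = e(n)}` of monomials. -/
def Cmon (n : ℕ) : Set (Mon (MVar n)) :=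
  {α | ∃ m1 m2 : ℕ, m1 + m2 = en n ∧
    α = Finsupp.single vl 1 + Finsupp.single vcb m1 + Finsupp.single vc m2}

/-- The set `D = {ℓ^j c̄^{m1} c^{m2} : j ∈ {0,1}, j + m1 + m2 ≤ e(n)}` of monomials. -/
def Dmon (n : ℕ) : Set (Mon (MVar n)) :=
  {α | ∃ j m1 m2 : ℕ, j ≤ 1 ∧ j + m1 + m2 ≤ en n ∧
    α = Finsupp.single vl j + Finsupp.single vcb m1 + Finsupp.single vc m2}

/-- An injective rank function on the variables realizing the variable ordering
(from least to greatest): `s, c, c̄, ℓ, b, b̄`; then `s_0,…,s_n`; `f_0,…,f_n`;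
`c_{10},…,c_{1n}; …; c_{40},…,c_{4n}`; `b_{10},…,b_{4n}`; `q_{10},…,q_{4n}`;
then the barred variables in the same pattern. -/
def vrank (n : ℕ) : MVar n → ℕ
  | .vs => 0
  | .vc => 1
  | .vcb => 2
  | .vl => 3
  | .vb => 4
  | .vbb => 5
  | .vS bar i => 6 + (cond bar (14 * (n+1)) 0) + (i : ℕ)
  | .vF bar i => 6 + (cond bar (14 * (n+1)) 0) + (n+1) + (i : ℕ)
  | .vC bar j i => 6 + (cond bar (14 * (n+1)) 0) + 2*(n+1) + (j : ℕ)*(n+1) + (i : ℕ)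
  | .vB bar j i => 6 + (cond bar (14 * (n+1)) 0) + 6*(n+1) + (j : ℕ)*(n+1) + (i : ℕ)
  | .vQ bar j i => 6 + (cond bar (14 * (n+1)) 0) + 10*(n+1) + (j : ℕ)*(n+1) + (i : ℕ)

/-- The lexicographic monomial order on `X`: `t ≼_lex u` iff `t = u` or the exponents differ
somewhere and at the greatest variable (w.r.t. `vrank`) where they differ, the exponent of
`t` is smaller. -/
def lexLe (n : ℕ) (t u : Mon (MVar n)) : Prop :=
  t = u ∨ ∃ x : MVar n, t x < u x ∧ ∀ y : MVar n, vrank n x < vrank n y → t y = u y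

/-- The total degree of a monomial. -/
def mdeg {σ : Type*} (t : Mon σ) : ℕ := t.sum fun _ k => k

/-- The degree lexicographic monomial order. -/
def degLexLe (n : ℕ) (t u : Mon (MVar n)) : Prop :=
  mdeg t < mdeg u ∨ (mdeg t = mdeg u ∧ lexLe n t u)

/-- Weighted degree of a monomial with respect to a weight map `w`. -/
noncomputable def wdeg {n : ℕ} (w : MVar n → ℝ) (t : Mon (MVar n)) : ℝ :=
  t.sum fun x k => (k : ℝ) * w x

/-- The weighted monomial order determined by the weight map `w`. -/
def wLe {n : ℕ} (w : MVar n → ℝ) (t u : Mon (MVar n)) : Prop := t = u ∨ wdeg w t < wdeg w u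


/-! ### Abstract counter configurations -/

/-- Unbarred level variables, indexed by natural numbers. -/
inductive NV : Type where
  | S (m : ℕ)
  | F (m : ℕ)
  | Q (j : Fin 4) (m : ℕ)
  | C (j : Fin 4) (m : ℕ)
  | B (j : Fin 4) (m : ℕ)
deriving DecidableEq

/-- Nothing below level `m`. -/
def Clean (t : NV → ℕ) (m : ℕ) : Prop :=
  (∀ k < m, t (.S k) = 0 ∧ t (.F k) = 0 ∧ (∀ j, t (.C j k) = 0) ∧ (∀ j, t (.B j k) = 0)) ∧
    ∀ k ≤ m, ∀ j, t (.Q j k) = 0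

/-- The token `s_m` or `f_m` is present and nothing is below. -/
def Base (t : NV → ℕ) (m v : ℕ) : Prop :=
  t (.S m) + t (.F m) = 1 ∧ Clean t m ∧ v = en m * t (.S m)

/-- Effective counters. -/
def KK (t : NV → ℕ) (m : ℕ) (j : Fin 4) (v : ℕ) (i : Fin 4) : ℕ :=
  t (.B i m) + if i = j then v else 0

/-- Validity and value of a state. -/
def St (e : ℕ) (j : Fin 4) (K : Fin 4 → ℕ) (v : ℕ) : Prop :=
  ((j = 0 ∨ j = 3) ∧ K 0 + K 3 = e ∧ K 1 = 0 ∧ K 2 = 0 ∧ v = e * K 0) ∨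
  ((j = 1 ∨ j = 2) ∧ K 0 + K 3 + 1 = e ∧ K 1 + K 2 = e ∧ v = e * K 0 + K 1)

/-- Exactly one `j` selected. -/
def Sel (f : Fin 4 → ℕ) (j : Fin 4) : Prop := ∀ i, f i = if i = j then 1 else 0

/-- The configuration below level `m` is alive with value `v` (in units of `b_m`). -/
def RR (t : NV → ℕ) : ℕ → ℕ → Prop
  | 0, v => Base t 0 v
  | (m+1), v => Base t (m+1) v ∨
      (t (.S (m+1)) = 0 ∧ t (.F (m+1)) = 0 ∧ ∃ j w, RR t m w ∧
        Sel (fun i => t (.Q i (m+1))) j ∧ Sel (fun i => t (.C i m)) j ∧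
        St (en m) j (KK t m j w) v)

/-- Simulation at level `m`. -/
def Sim (t t' : NV → ℕ) (m : ℕ) : Prop :=
  ∀ v j, RR t m v → Sel (fun i => t (.C i m)) j → ∃ w, RR t' m w ∧ KK t m j v = KK t' m j w

/-- Agreement above level `m`. -/
def Agree (t t' : NV → ℕ) (m : ℕ) : Prop :=
  (∀ k, m < k → t (.S k) = t' (.S k) ∧ t (.F k) = t' (.F k) ∧ (∀ j, t (.Q j k) = t' (.Q j k)) ∧
    (∀ j, t (.B j k) = t' (.B j k))) ∧ (∀ k, m ≤ k → ∀ j, t (.C j k) = t' (.C j k)) ∧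
  (∃ k ≤ m, t (.S k) + t (.F k) ≠ 0)

lemma Sim.step {t t' : NV → ℕ} {m : ℕ} (ha : Agree t t' m) (k : ℕ) (hk : m ≤ k)
    (hs : Sim t t' k) : Sim t t' (k+1) := by
  obtain ⟨h1, h2, k0, hk0, h3⟩ := ha
  intro v j hv hj
  obtain ⟨hS, hF, hQ, hB⟩ := h1 (k+1) (by omega)
  refine ⟨v, ?_, ?_⟩
  · rcases hv with hv | ⟨a1, a2, i, w, hw, b1, b2, b3⟩
    · obtain ⟨_, hc, _⟩ := hv
      have := hc.1 k0 (by omega)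
      omega
    · obtain ⟨w', hw', hK⟩ := hs w i hw b2
      refine Or.inr ⟨by omega, by omega, i, w', hw', ?_, ?_, ?_⟩
      · intro l; rw [← b1 l]; exact (hQ l).symm
      · intro l; rw [← b2 l]; exact (h2 k hk l).symm
      · rw [← hK]; exact b3
  · funext l; simp [KK, hB l]

lemma Sim.up {t t' : NV → ℕ} {m : ℕ} (ha : Agree t t' m) (hs : Sim t t' m) (k : ℕ) (hk : m ≤ k) :
    Sim t t' k := by
  induction k, hk using Nat.le_induction with
  | base => exact hs
  | succ k hk ih => exact Sim.step ha k hk ih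

lemma RR_base {t : NV → ℕ} {m v : ℕ} (h : t (.S m) + t (.F m) ≠ 0) : RR t m v ↔ Base t m v := by
  cases m with
  | zero => rfl
  | succ m =>
    constructor
    · rintro (h1 | ⟨h1, h2, _⟩)
      · exact h1
      · omega
    · exact Or.inl

lemma RR_step {t : NV → ℕ} {m v : ℕ} (h : t (.S m) + t (.F m) ≠ 0) : RR t (m+1) v ↔
    (t (.S (m+1)) = 0 ∧ t (.F (m+1)) = 0 ∧ t (.S m) + t (.F m) = 1 ∧ Clean t m ∧ ∃ j,
      Sel (fun i => t (.Q i (m+1))) j ∧ Sel (fun i => t (.C i m)) j ∧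
        St (en m) j (KK t m j (en m * t (.S m))) v) := by
  constructor
  · rintro (h1 | ⟨h1, h2, j, w, h3, h4⟩)
    · have := h1.2.1.1 m (by omega)
      omega
    · rw [RR_base h] at h3
      obtain ⟨a, b, rfl⟩ := h3
      exact ⟨h1, h2, a, b, j, h4⟩
  · rintro ⟨h1, h2, h3, h4, j, h5⟩
    exact Or.inr ⟨h1, h2, j, _, (RR_base h).2 ⟨h3, h4, rfl⟩, h5⟩

lemma en_succ (m : ℕ) : en (m+1) = en m * en m := by
  simp only [en, ← pow_add]; congr 1; ring

lemma en_pos (m : ℕ) : 0 < en m := by simp [en]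

lemma Sim.of_imp {t t' : NV → ℕ} {m : ℕ} (hB : ∀ j, t (.B j m) = t' (.B j m))
    (h : ∀ v, RR t m v → RR t' m v) : Sim t t' m := fun v j hv _ =>
  ⟨v, h v hv, by funext l; simp [KK, hB l]⟩

/-- One exponent. -/
abbrev sg (x : NV) : NV → ℕ := Pi.single x 1

lemma clean_congr {t t' : NV → ℕ} {m : ℕ}
    (h1 : ∀ k < m, t (.S k) = t' (.S k) ∧ t (.F k) = t' (.F k) ∧ (∀ j, t (.C j k) = t' (.C j k)) ∧
      (∀ j, t (.B j k) = t' (.B j k))) (h2 : ∀ k ≤ m, ∀ j, t (.Q j k) = t' (.Q j k)) :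
    Clean t m ↔ Clean t' m := by
  unfold Clean
  refine and_congr (forall₂_congr fun k hk => ?_) (forall₂_congr fun k hk => ?_)
  · obtain ⟨a, b, c, d⟩ := h1 k hk
    simp [a, b, c, d]
  · simp [h2 k hk]

/-- The configurations are equivalent for every purpose at level `n`. -/
def Eqv (t t' : NV → ℕ) (n : ℕ) : Prop :=
  Sim t t' n ∧ Sim t' t n ∧ (∀ j, t (.C j n) = t' (.C j n)) ∧
  (∃ k ≤ n, t (.S k) + t (.F k) ≠ 0) ∧ (∃ k ≤ n, t' (.S k) + t' (.F k) ≠ 0)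

lemma Eqv.mk' {t t' : NV → ℕ} {m n : ℕ} (h : m ≤ n) (ha : Agree t t' m) (ha' : Agree t' t m)
    (hs : Sim t t' m) (hs' : Sim t' t m) : Eqv t t' n := by
  refine ⟨hs.up ha n h, hs'.up ha' n h, ha.2.1 n h, ?_, ?_⟩
  · obtain ⟨k, hk, h3⟩ := ha.2.2; exact ⟨k, by omega, h3⟩
  · obtain ⟨k, hk, h3⟩ := ha'.2.2; exact ⟨k, by omega, h3⟩
set_option linter.unusedSimpArgs false


lemma rule0 (u : NV → ℕ) (i : Fin 4) (n : ℕ) :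
    Eqv (u + (sg (.B i 0) + sg (.B i 0) + sg (.C i 0) + sg (.F 0)))
      (u + (sg (.C i 0) + sg (.S 0))) n := by
  have hA : ∀ k, 0 < k → k ≠ 0 := fun k hk => by omega
  refine Eqv.mk' (Nat.zero_le n) ?_ ?_ ?_ ?_
  · refine ⟨fun k hk => ?_, fun k hk j => ?_, 0, le_rfl, ?_⟩ <;> simp [Pi.single_apply]
    · simp [hA k hk]
  · refine ⟨fun k hk => ?_, fun k hk j => ?_, 0, le_rfl, ?_⟩ <;> simp [Pi.single_apply]
    · simp [hA k hk]
  · intro v j hv hj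
    have hij : i = j := by
      have := hj i
      simp [Pi.single_apply] at this
      by_contra hne
      simp [hne] at this
    subst hij
    rw [RR_base (by simp [Pi.single_apply])] at hv
    obtain ⟨h1, h2, h3⟩ := hv
    have : en 0 = 2 := by simp [en]
    refine ⟨v + 2, ?_, ?_⟩
    · rw [RR_base (by simp [Pi.single_apply])]
      refine ⟨?_, (clean_congr ?_ ?_).1 h2, ?_⟩
      · simp [Pi.single_apply] at *; omega
      · intro k hk; omega
      · intro k hk; simp [Pi.single_apply]
      · simp [Pi.single_apply, this] at *; have : u (.S 0) = 0 := by omega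
        rw [h3, this]
    · funext l
      simp [KK, Pi.single_apply]
      split_ifs <;> omega
  · intro v j hv hj
    have hij : i = j := by
      have := hj i
      simp [Pi.single_apply] at this
      by_contra hne
      simp [hne] at this
    subst hij
    rw [RR_base (by simp [Pi.single_apply])] at hv
    obtain ⟨h1, h2, h3⟩ := hv
    have : en 0 = 2 := by simp [en]
    refine ⟨0, ?_, ?_⟩
    · rw [RR_base (by simp [Pi.single_apply])]
      refine ⟨?_, (clean_congr ?_ ?_).1 h2, ?_⟩
      · simp [Pi.single_apply] at *; omega
      · intro k hk; omega
      · intro k hk; simp [Pi.single_apply]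
      · simp [Pi.single_apply, this] at *; omega
    · funext l
      have h3' : v = 2 := by
        simp [Pi.single_apply, this] at h1 h3; have : u (.S 0) = 0 := by omega
        rw [h3, this]
      subst h3'
      simp [KK, Pi.single_apply]
      split_ifs <;> omega

lemma agree_of {t t' : NV → ℕ} {m : ℕ}
    (h : ∀ k, m < k → t (.S k) = t' (.S k) ∧ t (.F k) = t' (.F k) ∧
      (∀ j, t (.Q j k) = t' (.Q j k)) ∧ (∀ j, t (.B j k) = t' (.B j k)))
    (hC : ∀ k, m ≤ k → ∀ j, t (.C j k) = t' (.C j k))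
    (h1 : ∃ k ≤ m, t (.S k) + t (.F k) ≠ 0) (h2 : ∃ k ≤ m, t' (.S k) + t' (.F k) ≠ 0) :
    Agree t t' m ∧ Agree t' t m := by
  refine ⟨⟨h, hC, h1⟩, ⟨fun k hk => ?_, fun k hk j => (hC k hk j).symm, h2⟩⟩
  obtain ⟨a, b, c, d⟩ := h k hk
  exact ⟨a.symm, b.symm, fun j => (c j).symm, fun j => (d j).symm⟩

lemma Eqv.of_iff {t t' : NV → ℕ} {m n : ℕ} (hmn : m ≤ n)
    (h : ∀ k, m < k → t (.S k) = t' (.S k) ∧ t (.F k) = t' (.F k) ∧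
      (∀ j, t (.Q j k) = t' (.Q j k)) ∧ (∀ j, t (.B j k) = t' (.B j k)))
    (hB : ∀ j, t (.B j m) = t' (.B j m))
    (hC : ∀ k, m ≤ k → ∀ j, t (.C j k) = t' (.C j k))
    (h1 : ∃ k ≤ m, t (.S k) + t (.F k) ≠ 0) (h2 : ∃ k ≤ m, t' (.S k) + t' (.F k) ≠ 0)
    (hR : ∀ v, RR t m v ↔ RR t' m v) : Eqv t t' n := by
  obtain ⟨a, b⟩ := agree_of h hC h1 h2
  exact Eqv.mk' hmn a b (Sim.of_imp hB fun v => (hR v).1)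
    (Sim.of_imp (fun j => (hB j).symm) fun v => (hR v).2)

/-- A tokens-at-level-`m` pair is equivalent as soon as the finite data match. -/
lemma Eqv.of_flat {t t' : NV → ℕ} {m n : ℕ} (hmn : m + 1 ≤ n)
    (h : ∀ x, (∀ k, k > m + 1 → (x = .S k ∨ x = .F k ∨ (∃ j, x = .Q j k)) → t x = t' x) ∧
      (∀ k, k > m → (∃ j, x = .B j k ∨ x = .C j k) → t x = t' x) ∧
      (∀ k, k < m → (x = .S k ∨ x = .F k ∨ (∃ j, x = .B j k ∨ x = .C j k)) → t x = t' x) ∧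
      (∀ k, k ≤ m → (∃ j, x = .Q j k) → t x = t' x))
    (hS : t (.S (m+1)) = t' (.S (m+1))) (hF : t (.F (m+1)) = t' (.F (m+1)))
    (h1 : t (.S m) + t (.F m) ≠ 0) (h2 : t' (.S m) + t' (.F m) ≠ 0)
    (hT : t (.S m) + t (.F m) = 1 ↔ t' (.S m) + t' (.F m) = 1)
    (hR : t (.S m) + t (.F m) = 1 → t' (.S m) + t' (.F m) = 1 → ∀ v, (∃ j,
      Sel (fun i => t (.Q i (m+1))) j ∧ Sel (fun i => t (.C i m)) j ∧
        St (en m) j (KK t m j (en m * t (.S m))) v) ↔ (∃ j,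
      Sel (fun i => t' (.Q i (m+1))) j ∧ Sel (fun i => t' (.C i m)) j ∧
        St (en m) j (KK t' m j (en m * t' (.S m))) v)) : Eqv t t' n := by
  have hcl : Clean t m ↔ Clean t' m := clean_congr
    (fun k hk => ⟨(h _).2.2.1 k hk (by simp), (h _).2.2.1 k hk (by simp),
      fun j => (h _).2.2.1 k hk (by simp), fun j => (h _).2.2.1 k hk (by simp)⟩)
    (fun k hk j => (h _).2.2.2 k hk (by simp))
  refine Eqv.of_iff hmn ?_ ?_ ?_ ⟨m, by omega, h1⟩ ⟨m, by omega, h2⟩ ?_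
  · intro k hk
    exact ⟨(h _).1 k hk (by simp), (h _).1 k hk (by simp), fun j => (h _).1 k hk (by simp),
      fun j => (h _).2.1 k (by omega) (by simp)⟩
  · intro j; exact (h _).2.1 (m+1) (by omega) (by simp)
  · intro k hk j; exact (h _).2.1 k (by omega) (by simp)
  · intro v
    rw [RR_step h1, RR_step h2, hS, hF, hcl, hT]
    refine and_congr_right fun _ => and_congr_right fun _ => and_congr_right fun h3 =>
      and_congr_right fun _ => hR (hT.2 h3) h3 v


lemma rule2 (u : NV → ℕ) (m n : ℕ) (hmn : m + 1 ≤ n) :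
    Eqv (u + (sg (.Q 1 (m+1)) + sg (.C 1 m) + sg (.S m)))
      (u + (sg (.Q 0 (m+1)) + sg (.B 0 m) + sg (.C 0 m) + sg (.F m))) n := by
  apply Eqv.of_flat hmn
  · intro x
    refine ⟨?_, ?_, ?_, ?_⟩ <;> rintro k hk hx
    · have : k ≠ m ∧ k ≠ m + 1 := by omega
      rcases hx with rfl | rfl | ⟨j, rfl⟩ <;> simp [Pi.single_apply, this]
    · have : k ≠ m := by omega
      rcases hx with ⟨j, rfl | rfl⟩ <;> simp [Pi.single_apply, this]
    · have : k ≠ m ∧ k ≠ m + 1 := by omega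
      rcases hx with rfl | rfl | ⟨j, rfl | rfl⟩ <;> simp [Pi.single_apply, this]
    · have : k ≠ m + 1 := by omega
      rcases hx with ⟨j, rfl⟩ <;> simp [Pi.single_apply, this]
  · simp
  · simp
  · simp
  · simp
  · simp <;> omega
  · intro a b v
    have := en_pos m
    simp at a b
    obtain ⟨hs, hf⟩ : u (.S m) = 0 ∧ u (.F m) = 0 := by omega
    simp [Pi.single_apply, Sel, St, KK, Fin.forall_fin_succ, Fin.exists_fin_succ, hs, mul_add]
    try omega

lemma rule3 (u : NV → ℕ) (m n : ℕ) (hmn : m + 1 ≤ n) :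
    Eqv (u + (sg (.Q 2 (m+1)) + sg (.C 2 m) + sg (.F m)))
      (u + (sg (.Q 1 (m+1)) + sg (.C 1 m) + sg (.F m))) n := by
  apply Eqv.of_flat hmn
  · intro x
    refine ⟨?_, ?_, ?_, ?_⟩ <;> rintro k hk hx
    · have : k ≠ m ∧ k ≠ m + 1 := by omega
      rcases hx with rfl | rfl | ⟨j, rfl⟩ <;> simp [Pi.single_apply, this]
    · have : k ≠ m := by omega
      rcases hx with ⟨j, rfl | rfl⟩ <;> simp [Pi.single_apply, this]
    · have : k ≠ m ∧ k ≠ m + 1 := by omega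
      rcases hx with rfl | rfl | ⟨j, rfl | rfl⟩ <;> simp [Pi.single_apply, this]
    · have : k ≠ m + 1 := by omega
      rcases hx with ⟨j, rfl⟩ <;> simp [Pi.single_apply, this]
  · simp
  · simp
  · simp
  · simp
  · simp <;> omega
  · intro a b v
    have := en_pos m
    simp at a b
    obtain ⟨hs, hf⟩ : u (.S m) = 0 ∧ u (.F m) = 0 := by omega
    simp [Pi.single_apply, Sel, St, KK, Fin.forall_fin_succ, Fin.exists_fin_succ, hs, mul_add]
    try omega

lemma rule4 (u : NV → ℕ) (m n : ℕ) (hmn : m + 1 ≤ n) :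
    Eqv (u + (sg (.Q 2 (m+1)) + sg (.B 0 m) + sg (.C 2 m) + sg (.S m)))
      (u + (sg (.Q 1 (m+1)) + sg (.B 3 m) + sg (.C 1 m) + sg (.S m))) n := by
  apply Eqv.of_flat hmn
  · intro x
    refine ⟨?_, ?_, ?_, ?_⟩ <;> rintro k hk hx
    · have : k ≠ m ∧ k ≠ m + 1 := by omega
      rcases hx with rfl | rfl | ⟨j, rfl⟩ <;> simp [Pi.single_apply, this]
    · have : k ≠ m := by omega
      rcases hx with ⟨j, rfl | rfl⟩ <;> simp [Pi.single_apply, this]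
    · have : k ≠ m ∧ k ≠ m + 1 := by omega
      rcases hx with rfl | rfl | ⟨j, rfl | rfl⟩ <;> simp [Pi.single_apply, this]
    · have : k ≠ m + 1 := by omega
      rcases hx with ⟨j, rfl⟩ <;> simp [Pi.single_apply, this]
  · simp
  · simp
  · simp
  · simp
  · simp <;> omega
  · intro a b v
    have := en_pos m
    simp at a b
    obtain ⟨hs, hf⟩ : u (.S m) = 0 ∧ u (.F m) = 0 := by omega
    simp [Pi.single_apply, Sel, St, KK, Fin.forall_fin_succ, Fin.exists_fin_succ, hs, mul_add]
    try omega

lemma rule5 (u : NV → ℕ) (m n : ℕ) (hmn : m + 1 ≤ n) :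
    Eqv (u + (sg (.Q 3 (m+1)) + sg (.B 3 m) + sg (.C 3 m) + sg (.F m)))
      (u + (sg (.Q 2 (m+1)) + sg (.C 2 m) + sg (.S m))) n := by
  apply Eqv.of_flat hmn
  · intro x
    refine ⟨?_, ?_, ?_, ?_⟩ <;> rintro k hk hx
    · have : k ≠ m ∧ k ≠ m + 1 := by omega
      rcases hx with rfl | rfl | ⟨j, rfl⟩ <;> simp [Pi.single_apply, this]
    · have : k ≠ m := by omega
      rcases hx with ⟨j, rfl | rfl⟩ <;> simp [Pi.single_apply, this]
    · have : k ≠ m ∧ k ≠ m + 1 := by omega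
      rcases hx with rfl | rfl | ⟨j, rfl | rfl⟩ <;> simp [Pi.single_apply, this]
    · have : k ≠ m + 1 := by omega
      rcases hx with ⟨j, rfl⟩ <;> simp [Pi.single_apply, this]
  · simp
  · simp
  · simp
  · simp
  · simp <;> omega
  · intro a b v
    have := en_pos m
    simp at a b
    obtain ⟨hs, hf⟩ : u (.S m) = 0 ∧ u (.F m) = 0 := by omega
    simp [Pi.single_apply, Sel, St, KK, Fin.forall_fin_succ, Fin.exists_fin_succ, hs, mul_add]
    try omega

lemma rule1 (u : NV → ℕ) (m n : ℕ) (hmn : m + 1 ≤ n) :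
    Eqv (u + (sg (.Q 0 (m+1)) + sg (.C 0 m) + sg (.S m))) (u + sg (.S (m+1))) n := by
  apply Eqv.of_iff hmn
  · intro k hk
    have : k ≠ m ∧ k ≠ m + 1 := by omega
    simp [Pi.single_apply, this]
  · intro j; simp [Pi.single_apply]
  · intro k hk j
    have : k ≠ m := by omega
    simp [Pi.single_apply, this]
  · exact ⟨m, by omega, by simp⟩
  · exact ⟨m + 1, by omega, by simp⟩
  · intro v
    rw [RR_step (by simp), RR_base (by simp)]
    have hp := en_pos m
    have he := en_succ m
    constructor
    · rintro ⟨h1, h2, h3, h4, h5⟩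
      simp at h1 h2 h3
      obtain ⟨hs, hf⟩ : u (.S m) = 0 ∧ u (.F m) = 0 := by omega
      simp [Pi.single_apply, Sel, St, KK, Fin.forall_fin_succ, Fin.exists_fin_succ, hs,
        mul_add] at h5
      obtain ⟨⟨q0, q1, q2, q3⟩, ⟨c0, c1, c2, c3⟩, b1, b2, b3, b4⟩ := h5
      have b5 : u (.B 0 m) = 0 := by omega
      have b6 : u (.B 3 m) = 0 := by omega
      refine ⟨?_, ⟨?_, ?_⟩, ?_⟩
      · simp; omega
      · intro k hk
        rcases Nat.lt_succ_iff_lt_or_eq.1 hk with hk | rfl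
        · obtain ⟨a1, a2, a3, a4⟩ := h4.1 k hk
          have : k ≠ m ∧ k ≠ m + 1 := by omega
          simp [Pi.single_apply, this] at a1 a2 a3 a4
          simp [Pi.single_apply, this, a1, a2, a3, a4]
        · simp [Pi.single_apply, Fin.forall_fin_succ, *]
      · intro k hk j
        rcases Nat.le_succ_iff.1 hk with hk | rfl
        · have := h4.2 k hk j
          have h : k ≠ m + 1 := by omega
          simpa [Pi.single_apply, h] using this
        · revert j
          simp [Pi.single_apply, Fin.forall_fin_succ, *]
      · simp [h1, h2, b4, b5, he]
    · rintro ⟨h1, ⟨h2, h3⟩, h4⟩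
      simp at h1 h4
      obtain ⟨hs, hf⟩ : u (.S (m+1)) = 0 ∧ u (.F (m+1)) = 0 := by omega
      obtain ⟨a1, a2, a3, a4⟩ := h2 m (by omega)
      have a5 := h3 (m+1) le_rfl
      simp at a1 a2 a3 a4 a5
      refine ⟨by simp [hs], by simp [hf], by simp [a1, a2], ⟨?_, ?_⟩, ?_⟩
      · intro k hk
        obtain ⟨b1, b2, b3, b4⟩ := h2 k (by omega)
        have : k ≠ m ∧ k ≠ m + 1 := by omega
        simp [Pi.single_apply, this] at b1 b2 b3 b4
        simp [Pi.single_apply, this, b1, b2, b3, b4]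
      · intro k hk j
        have b1 := h3 k (by omega) j
        have h : k ≠ m + 1 := by omega
        simpa [Pi.single_apply, h] using b1
      · simp [Pi.single_apply, Sel, St, KK, Fin.forall_fin_succ, Fin.exists_fin_succ, a1, a3, a4,
          a5, h4, hs, he]

lemma rule6 (u : NV → ℕ) (m n : ℕ) (hmn : m + 1 ≤ n) :
    Eqv (u + (sg (.Q 3 (m+1)) + sg (.C 3 m) + sg (.S m))) (u + sg (.F (m+1))) n := by
  apply Eqv.of_iff hmn
  · intro k hk
    have : k ≠ m ∧ k ≠ m + 1 := by omega
    simp [Pi.single_apply, this]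
  · intro j; simp [Pi.single_apply]
  · intro k hk j
    have : k ≠ m := by omega
    simp [Pi.single_apply, this]
  · exact ⟨m, by omega, by simp⟩
  · exact ⟨m + 1, by omega, by simp⟩
  · intro v
    rw [RR_step (by simp), RR_base (by simp)]
    have hp := en_pos m
    have he := en_succ m
    constructor
    · rintro ⟨h1, h2, h3, h4, h5⟩
      simp at h1 h2 h3
      obtain ⟨hs, hf⟩ : u (.S m) = 0 ∧ u (.F m) = 0 := by omega
      simp [Pi.single_apply, Sel, St, KK, Fin.forall_fin_succ, Fin.exists_fin_succ, hs,
        mul_add] at h5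
      obtain ⟨⟨q0, q1, q2, q3⟩, ⟨c0, c1, c2, c3⟩, b1, b2, b3, b4⟩ := h5
      have b5 : u (.B 0 m) = 0 := by omega
      have b6 : u (.B 3 m) = 0 := by omega
      refine ⟨?_, ⟨?_, ?_⟩, ?_⟩
      · simp; omega
      · intro k hk
        rcases Nat.lt_succ_iff_lt_or_eq.1 hk with hk | rfl
        · obtain ⟨a1, a2, a3, a4⟩ := h4.1 k hk
          have : k ≠ m ∧ k ≠ m + 1 := by omega
          simp [Pi.single_apply, this] at a1 a2 a3 a4
          simp [Pi.single_apply, this, a1, a2, a3, a4]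
        · simp [Pi.single_apply, Fin.forall_fin_succ, *]
      · intro k hk j
        rcases Nat.le_succ_iff.1 hk with hk | rfl
        · have := h4.2 k hk j
          have h : k ≠ m + 1 := by omega
          simpa [Pi.single_apply, h] using this
        · revert j
          simp [Pi.single_apply, Fin.forall_fin_succ, *]
      · simp [h1, h2, b4, b5, he]
    · rintro ⟨h1, ⟨h2, h3⟩, h4⟩
      simp at h1 h4
      obtain ⟨hs, hf⟩ : u (.S (m+1)) = 0 ∧ u (.F (m+1)) = 0 := by omega
      obtain ⟨a1, a2, a3, a4⟩ := h2 m (by omega)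
      have a5 := h3 (m+1) le_rfl
      simp at a1 a2 a3 a4 a5
      refine ⟨by simp [hs], by simp [hf], by simp [a1, a2], ⟨?_, ?_⟩, ?_⟩
      · intro k hk
        obtain ⟨b1, b2, b3, b4⟩ := h2 k (by omega)
        have : k ≠ m ∧ k ≠ m + 1 := by omega
        simp [Pi.single_apply, this] at b1 b2 b3 b4
        simp [Pi.single_apply, this, b1, b2, b3, b4]
      · intro k hk j
        have b1 := h3 k (by omega) j
        have h : k ≠ m + 1 := by omega
        simpa [Pi.single_apply, h] using b1
      · simp [Pi.single_apply, Sel, St, KK, Fin.forall_fin_succ, Fin.exists_fin_succ, a1, a3, a4,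
          a5, h4, hs, he]

lemma rule7 (u : NV → ℕ) (m n : ℕ) (i : Fin 4) (hmn : m + 1 ≤ n) :
    Eqv (u + (sg (.Q 1 (m+1)) + sg (.B 2 m) + sg (.B i (m+1)) + sg (.C i (m+1)) + sg (.F m)))
      (u + (sg (.Q 1 (m+1)) + sg (.B 1 m) + sg (.C i (m+1)) + sg (.F m))) n := by
  obtain ⟨ha, hb⟩ : Agree
      (u + (sg (.Q 1 (m+1)) + sg (.B 2 m) + sg (.B i (m+1)) + sg (.C i (m+1)) + sg (.F m)))
      (u + (sg (.Q 1 (m+1)) + sg (.B 1 m) + sg (.C i (m+1)) + sg (.F m))) (m+1) ∧ Agree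
      (u + (sg (.Q 1 (m+1)) + sg (.B 1 m) + sg (.C i (m+1)) + sg (.F m)))
      (u + (sg (.Q 1 (m+1)) + sg (.B 2 m) + sg (.B i (m+1)) + sg (.C i (m+1)) + sg (.F m)))
      (m+1) := by
    apply agree_of
    · intro k hk
      have : k ≠ m ∧ k ≠ m + 1 := by omega
      simp [Pi.single_apply, this]
    · intro k hk j
      simp [Pi.single_apply]
    · exact ⟨m, by omega, by simp⟩
    · exact ⟨m, by omega, by simp⟩
  have hcl : Clean
      (u + (sg (.Q 1 (m+1)) + sg (.B 2 m) + sg (.B i (m+1)) + sg (.C i (m+1)) + sg (.F m))) m ↔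
      Clean (u + (sg (.Q 1 (m+1)) + sg (.B 1 m) + sg (.C i (m+1)) + sg (.F m))) m := by
    apply clean_congr
    · intro k hk
      have : k ≠ m ∧ k ≠ m + 1 := by omega
      simp [Pi.single_apply, this]
    · intro k hk j
      simp [Pi.single_apply]
  refine Eqv.mk' hmn ha hb ?_ ?_
  · intro v j hv hj
    have hij : i = j := by
      have := hj i
      by_contra hne
      simp [hne] at this
    subst hij
    refine ⟨v + 1, ?_, ?_⟩
    · rw [RR_step (by simp)] at hv ⊢
      rw [← hcl]
      obtain ⟨h1, h2, h3, h4, h5⟩ := hv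
      refine ⟨by simpa using h1, by simpa using h2, by simpa using h3, h4, ?_⟩
      simp at h3
      obtain ⟨hs, hf⟩ : u (.S m) = 0 ∧ u (.F m) = 0 := by omega
      simp [Pi.single_apply, Sel, St, KK, Fin.forall_fin_succ, Fin.exists_fin_succ, hs] at h5 ⊢
      omega
    · funext l
      simp [KK, Pi.single_apply]
      split_ifs <;> omega
  · intro v j hv hj
    have hij : i = j := by
      have := hj i
      by_contra hne
      simp [hne] at this
    subst hij
    rw [RR_step (by simp)] at hv
    obtain ⟨h1, h2, h3, h4, h5⟩ := hv
    have h3' := h3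
    simp at h3'
    obtain ⟨hs, hf⟩ : u (.S m) = 0 ∧ u (.F m) = 0 := by omega
    simp [Pi.single_apply, Sel, St, KK, Fin.forall_fin_succ, Fin.exists_fin_succ, hs] at h5
    refine ⟨v - 1, ?_, ?_⟩
    · rw [RR_step (by simp), hcl]
      refine ⟨by simpa using h1, by simpa using h2, by simpa using h3, h4, ?_⟩
      simp [Pi.single_apply, Sel, St, KK, Fin.forall_fin_succ, Fin.exists_fin_succ, hs]
      omega
    · funext l
      simp [KK, Pi.single_apply]
      split_ifs <;> omega

/-! ### The invariant set of monomials -/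

/-- TopC-level condition on the unbarred level variables, the exponent `l` of `ℓ` and
the total exponent `c` of `c, c̄`. -/
def TopC (n : ℕ) (t : NV → ℕ) (l c : ℕ) : Prop :=
  (l = 1 ∧ Clean t n ∧ t (.S n) = 0 ∧ t (.F n) = 0 ∧ (∀ j, t (.C j n) = 0) ∧
    (∀ i, i ≠ 3 → t (.B i n) = 0) ∧ t (.B 3 n) + c < en n) ∨
  (l = 0 ∧ Sel (fun i => t (.C i n)) 3 ∧ ∃ v, RR t n v ∧
    (∀ i, i ≠ 3 → t (.B i n) = 0) ∧ t (.B 3 n) + v + c < en n)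

lemma TopC.of_eqv {n : ℕ} {t t' : NV → ℕ} {l c : ℕ} (h : Sim t t' n)
    (hC : ∀ j, t (.C j n) = t' (.C j n)) (ht : ∃ k ≤ n, t (.S k) + t (.F k) ≠ 0)
    (hT : TopC n t l c) : TopC n t' l c := by
  rcases hT with ⟨_, h1, h2, h3, _⟩ | ⟨h1, h2, v, h3, h4, h5⟩
  · exfalso
    obtain ⟨k, hk, h⟩ := ht
    rcases Nat.lt_or_eq_of_le hk with hk | rfl
    · have := h1.1 k hk; omega
    · omega
  · obtain ⟨w, hw, hK⟩ := h v 3 h3 h2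
    refine Or.inr ⟨h1, fun i => by rw [← h2 i]; exact (hC i).symm, w, hw, fun i hi => ?_, ?_⟩
    · have := congrFun hK i
      simp [KK, hi] at this
      rw [← this, h4 i hi]
    · have := congrFun hK 3
      simp [KK] at this
      omega

lemma Eqv.top {n : ℕ} {t t' : NV → ℕ} (h : Eqv t t' n) (l c : ℕ) :
    TopC n t l c ↔ TopC n t' l c :=
  ⟨TopC.of_eqv h.1 h.2.2.1 h.2.2.2.1, TopC.of_eqv h.2.1 (fun j => (h.2.2.1 j).symm) h.2.2.2.2⟩

lemma top_l (n : ℕ) (t : NV → ℕ) (l c : ℕ) :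
    TopC n (t + (sg (.C 3 n) + sg (.F n))) l c ↔ TopC n t (l + 1) c := by
  have hcl : Clean (t + (sg (.C 3 n) + sg (.F n))) n ↔ Clean t n := by
    apply clean_congr
    · intro k hk
      have : k ≠ n := by omega
      simp [Pi.single_apply, this]
    · intro k hk; simp
  constructor
  · rintro (⟨_, _, _, h, _⟩ | ⟨h1, h2, v, h3, h4, h5⟩)
    · simp at h
    · rw [RR_base (by simp)] at h3
      obtain ⟨a1, a2, a3⟩ := h3
      rw [hcl] at a2
      simp at a1 a3 h5
      refine Or.inl ⟨by omega, a2, by omega, by omega, ?_, ?_, by omega⟩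
      · intro j
        have := h2 j
        by_cases hj : j = 3
        · subst hj; simpa using this
        · simpa [hj, Pi.single_apply] using this
      · intro i hi; simpa using h4 i hi
  · rintro (⟨h1, h2, h3, h4, h5, h6, h7⟩ | h)
    · refine Or.inr ⟨by omega, ?_, 0, ?_, ?_, ?_⟩
      · intro i; simp [h5, Pi.single_apply]
      · rw [RR_base (by simp)]
        refine ⟨by simp [h3, h4], hcl.2 h2, by simp [h3]⟩
      · intro i hi; simpa using h6 i hi
      · simpa using h7
    · omega

lemma top_b (n : ℕ) (t : NV → ℕ) (l c : ℕ) :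
    TopC n (t + sg (.B 3 n)) (l + 1) c ↔ TopC n t (l + 1) (c + 1) := by
  have hcl : Clean (t + sg (.B 3 n)) n ↔ Clean t n := by
    apply clean_congr
    · intro k hk
      have : k ≠ n := by omega
      simp [Pi.single_apply, this]
    · intro k hk; simp
  have h : t (.B 3 n) + (c + 1) = t (.B 3 n) + 1 + c := by omega
  unfold TopC
  rw [hcl]
  simp +contextual [h]

lemma top_s (n : ℕ) (t : NV → ℕ) (l c : ℕ) (h1 : t (.C 3 n) ≠ 0) (h2 : t (.S n) ≠ 0) :
    ¬ TopC n t l c := by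
  rintro (⟨_, _, _, _, h, _⟩ | ⟨_, _, v, h3, h4, h5⟩)
  · exact h1 (h 3)
  · rw [RR_base (by omega)] at h3
    obtain ⟨a1, a2, a3⟩ := h3
    have : t (.S n) = 1 := by omega
    rw [this] at a3
    omega

/-- The unbarred level part of a monomial. -/
def cfg {n : ℕ} (u : Mon (MVar n)) : NV → ℕ
  | .S m => if h : m < n + 1 then u (vS false ⟨m, h⟩) else 0
  | .F m => if h : m < n + 1 then u (vF false ⟨m, h⟩) else 0
  | .Q j m => if h : m < n + 1 then u (vQ false j ⟨m, h⟩) else 0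
  | .C j m => if h : m < n + 1 then u (vC false j ⟨m, h⟩) else 0
  | .B j m => if h : m < n + 1 then u (vB false j ⟨m, h⟩) else 0

lemma cfg_add {n : ℕ} (u v : Mon (MVar n)) : cfg (u + v) = cfg u + cfg v := by
  funext x
  cases x <;> simp only [cfg, Pi.add_apply, Finsupp.add_apply] <;> split_ifs <;> rfl

section
variable {n : ℕ}

lemma cfg_S (i : Fin (n+1)) (k : ℕ) :
    cfg (Finsupp.single (vS false i) k) = Pi.single (.S i) k := by
  funext x
  cases x <;> simp [cfg, Finsupp.single_apply, Pi.single_apply, Fin.ext_iff]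
  have := i.2
  grind

lemma cfg_F (i : Fin (n+1)) (k : ℕ) :
    cfg (Finsupp.single (vF false i) k) = Pi.single (.F i) k := by
  funext x
  cases x <;> simp [cfg, Finsupp.single_apply, Pi.single_apply, Fin.ext_iff]
  have := i.2
  grind

lemma cfg_Q (j : Fin 4) (i : Fin (n+1)) (k : ℕ) :
    cfg (Finsupp.single (vQ false j i) k) = Pi.single (.Q j i) k := by
  funext x
  cases x <;> simp [cfg, Finsupp.single_apply, Pi.single_apply, Fin.ext_iff]
  have := i.2
  grind

lemma cfg_C (j : Fin 4) (i : Fin (n+1)) (k : ℕ) :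
    cfg (Finsupp.single (vC false j i) k) = Pi.single (.C j i) k := by
  funext x
  cases x <;> simp [cfg, Finsupp.single_apply, Pi.single_apply, Fin.ext_iff]
  have := i.2
  grind

lemma cfg_B (j : Fin 4) (i : Fin (n+1)) (k : ℕ) :
    cfg (Finsupp.single (vB false j i) k) = Pi.single (.B j i) k := by
  funext x
  cases x <;> simp [cfg, Finsupp.single_apply, Pi.single_apply, Fin.ext_iff]
  have := i.2
  grind

/-- Variables outside the unbarred level part. -/
def Outer : MVar n → Prop
  | .vS b _ => b = true
  | .vF b _ => b = true
  | .vQ b _ _ => b = true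
  | .vC b _ _ => b = true
  | .vB b _ _ => b = true
  | _ => True

/-- Variables that kill a monomial. -/
def Bad : MVar n → Prop
  | .vs => True
  | .vS b _ => b = true
  | .vF b _ => b = true
  | .vQ b _ _ => b = true
  | .vC b _ _ => b = true
  | .vB b _ _ => b = true
  | _ => False

lemma cfg_outer (x : MVar n) (hx : Outer x) (k : ℕ) : cfg (Finsupp.single x k) = 0 := by
  funext y
  cases x <;> cases y <;> simp [Outer] at hx <;> simp [cfg, hx]

/-- The invariant set. -/
def AA (n m1 m2 : ℕ) (u : Mon (MVar n)) : Prop :=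
  (∀ x, Bad x → u x = 0) ∧ u vb + u vc = m2 ∧ u vbb + u vcb = m1 ∧
    TopC n (cfg u) (u vl) (u vc + u vcb)

lemma AA_bad {m1 m2 : ℕ} {u : Mon (MVar n)} (x : MVar n) (hx : Bad x) (h : u x ≠ 0) :
    ¬ AA n m1 m2 u := fun hA => h (hA.1 x hx)

/-- Rewriting unbarred level variables only. -/
lemma AA_eqv {m1 m2 : ℕ} (u a b : Mon (MVar n)) (ha : ∀ x, Outer x → a x = 0)
    (hb : ∀ x, Outer x → b x = 0) (h : Eqv (cfg u + cfg a) (cfg u + cfg b) n) :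
    AA n m1 m2 (u + a) ↔ AA n m1 m2 (u + b) := by
  have hbad : ∀ x : MVar n, Bad x → Outer x := by
    intro x hx; cases x <;> simp_all [Bad, Outer]
  unfold AA
  rw [cfg_add, cfg_add]
  simp only [Finsupp.add_apply, ha vb trivial, ha vc trivial, ha vbb trivial, ha vcb trivial,
    ha vl trivial, hb vb trivial, hb vc trivial, hb vbb trivial, hb vcb trivial,
    hb vl trivial, add_zero]
  refine and_congr (forall₂_congr fun x hx => ?_) (and_congr Iff.rfl (and_congr Iff.rfl ?_))
  · rw [ha x (hbad x hx), hb x (hbad x hx)]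
  · exact h.top _ _

/-- The two monomials of a rule are interchangeable in the invariant set. -/
def Good (m1 m2 : ℕ) (p : MPoly n) : Prop :=
  ∃ a b : Mon (MVar n), p = monomial a 1 + monomial b 1 ∧
    ∀ u, AA n m1 m2 (u + a) ↔ AA n m1 m2 (u + b)

open Classical in
/-- The linear functional counting the monomials of the invariant set modulo two. -/
noncomputable def LL (n m1 m2 : ℕ) : MPoly n →ₗ[ZMod 2] ZMod 2 :=
  (basisMonomials (MVar n) (ZMod 2)).constr (ZMod 2) fun u => if AA n m1 m2 u then 1 else 0

open Classical in
lemma LL_mono (m1 m2 : ℕ) (u : Mon (MVar n)) :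
    LL n m1 m2 (monomial u 1) = if AA n m1 m2 u then 1 else 0 := by
  have := (basisMonomials (MVar n) (ZMod 2)).constr_basis (ZMod 2)
    (fun u => if AA n m1 m2 u then (1 : ZMod 2) else 0) u
  simpa [LL] using this

lemma LL_zero (m1 m2 : ℕ) (F : Set (MPoly n)) (hF : ∀ p ∈ F, Good m1 m2 p) (p : MPoly n)
    (hp : p ∈ Ideal.span F) : ∀ q, LL n m1 m2 (q * p) = 0 := by
  induction hp using Submodule.span_induction with
  | mem p hp =>
    obtain ⟨a, b, rfl, h⟩ := hF p hp
    intro q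
    induction q using MvPolynomial.induction_on' with
    | monomial u c =>
      have h1 : (monomial u c : MPoly n) = c • monomial u 1 := by simp [smul_monomial]
      rw [h1, smul_mul_assoc, map_smul, mul_add, monomial_mul, monomial_mul, map_add, one_mul,
        LL_mono, LL_mono]
      by_cases hA : AA n m1 m2 (u + a)
      · rw [if_pos hA, if_pos ((h u).1 hA)]
        have : (1 + 1 : ZMod 2) = 0 := by decide
        rw [this, smul_zero]
      · rw [if_neg hA, if_neg (fun h' => hA ((h u).2 h'))]
        simp
    | add p q hp hq => rw [add_mul, map_add, hp, hq, add_zero]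
  | zero => simp
  | add p q _ _ hp hq => intro r; rw [mul_add, map_add, hp, hq, add_zero]
  | smul a p _ hp => intro q; rw [smul_eq_mul, ← mul_assoc]; exact hp _

lemma Good.of_bad {m1 m2 : ℕ} (a b : Mon (MVar n)) (x y : MVar n) (hx : Bad x) (hy : Bad y)
    (ha : a x ≠ 0) (hb : b y ≠ 0) : Good m1 m2 (monomial a 1 + monomial b 1 : MPoly n) :=
  ⟨a, b, rfl, fun u => iff_of_false (AA_bad x hx (by simp [ha])) (AA_bad y hy (by simp [hb]))⟩

lemma Good.of_eqv {m1 m2 : ℕ} (a b : Mon (MVar n)) (ha : ∀ x, Outer x → a x = 0)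
    (hb : ∀ x, Outer x → b x = 0) (h : ∀ t, Eqv (t + cfg a) (t + cfg b) n) :
    Good m1 m2 (monomial a 1 + monomial b 1 : MPoly n) :=
  ⟨a, b, rfl, fun u => AA_eqv u a b ha hb (h _)⟩

lemma good_P0 (m1 m2 : ℕ) (bar : Bool) (p : MPoly n) (hp : p ∈ P0 n bar) : Good m1 m2 p := by
  obtain ⟨j, rfl⟩ := hp
  simp only [X, monomial_mul, mul_one, pow_two]
  cases bar with
  | true =>
    exact Good.of_bad _ _ (vC true j 0) (vC true j 0) rfl rfl (by simp) (by simp)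
  | false =>
    apply Good.of_eqv
    · intro x hx; cases x <;> simp_all [Outer]
    · intro x hx; cases x <;> simp_all [Outer]
    · intro t
      simp only [cfg_add, cfg_B, cfg_C, cfg_F, cfg_S, Fin.val_zero]
      exact rule0 t j n

lemma good_Pm_true (m1 m2 : ℕ) (i : Fin n) (p : MPoly n) (hp : p ∈ Pm n true i) :
    Good m1 m2 p := by
  rcases hp with (rfl | rfl | rfl | rfl | rfl | rfl) | ⟨j, rfl⟩ <;>
    simp only [X, monomial_mul, mul_one]
  · exact Good.of_bad _ _ (vS true i.castSucc) (vS true i.succ) rfl rfl (by simp) (by simp)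
  · exact Good.of_bad _ _ (vS true i.castSucc) (vF true i.castSucc) rfl rfl (by simp) (by simp)
  · exact Good.of_bad _ _ (vF true i.castSucc) (vF true i.castSucc) rfl rfl (by simp) (by simp)
  · exact Good.of_bad _ _ (vS true i.castSucc) (vS true i.castSucc) rfl rfl (by simp) (by simp)
  · exact Good.of_bad _ _ (vF true i.castSucc) (vS true i.castSucc) rfl rfl (by simp) (by simp)
  · exact Good.of_bad _ _ (vS true i.castSucc) (vF true i.succ) rfl rfl (by simp) (by simp)
  · exact Good.of_bad _ _ (vF true i.castSucc) (vF true i.castSucc) rfl rfl (by simp) (by simp)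

lemma good_Pm_false (m1 m2 : ℕ) (i : Fin n) (p : MPoly n) (hp : p ∈ Pm n false i) :
    Good m1 m2 p := by
  have hi : (i : ℕ) + 1 ≤ n := i.2
  rcases hp with (rfl | rfl | rfl | rfl | rfl | rfl) | ⟨j, rfl⟩ <;>
    simp only [X, monomial_mul, mul_one] <;>
    refine Good.of_eqv _ _ (by intro x hx; cases x <;> simp_all [Outer])
      (by intro x hx; cases x <;> simp_all [Outer]) fun t => ?_ <;>
    simp only [cfg_add, cfg_B, cfg_C, cfg_F, cfg_S, cfg_Q, Fin.val_succ, Fin.val_castSucc]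
  · exact rule1 t i n hi
  · exact rule2 t i n hi
  · exact rule3 t i n hi
  · exact rule4 t i n hi
  · exact rule5 t i n hi
  · exact rule6 t i n hi
  · exact rule7 t i n j hi

lemma good_GG (m1 m2 : ℕ) (p : MPoly n) (hp : p ∈ GG n) : Good m1 m2 p := by
  have hdead : ∀ u : Mon (MVar n), u (vC false 3 (Fin.last n)) ≠ 0 →
      u (vS false (Fin.last n)) ≠ 0 → ¬ AA n m1 m2 u := by
    intro u h1 h2 hA
    refine top_s n _ _ _ ?_ ?_ hA.2.2.2
    · simp [cfg]; exact h1
    · simp [cfg]; exact h2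
  have hb : ∀ (y : MVar n), Bad y → ∀ x, ¬ Bad x → x ≠ y := by
    rintro y hy x hx rfl; exact hx hy
  rcases hp with rfl | rfl | rfl | rfl | rfl | rfl | rfl <;>
    simp only [X, monomial_mul, mul_one]
  · refine ⟨_, _, rfl, fun u => ?_⟩
    unfold AA
    refine and_congr (forall₂_congr fun x hx => ?_) (and_congr ?_ (and_congr ?_ ?_))
    · cases x <;> simp_all [Bad]
    · simp; omega
    · simp
    · have := top_b n (cfg u) (u vl) (u vc + u vcb)
      simp [cfg_add, cfg_B, cfg_outer vl trivial, cfg_outer vb trivial, cfg_outer vc trivial]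
      rw [this, add_right_comm]
  · refine ⟨_, _, rfl, fun u => ?_⟩
    unfold AA
    refine and_congr (forall₂_congr fun x hx => ?_) (and_congr ?_ (and_congr ?_ ?_))
    · cases x <;> simp_all [Bad]
    · simp
    · simp; omega
    · have := top_b n (cfg u) (u vl) (u vc + u vcb)
      simp [cfg_add, cfg_B, cfg_outer vl trivial, cfg_outer vbb trivial, cfg_outer vcb trivial]
      rw [this, add_assoc]
  · refine ⟨_, _, rfl, fun u => ?_⟩
    unfold AA
    refine and_congr (forall₂_congr fun x hx => ?_) (and_congr ?_ (and_congr ?_ ?_))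
    · cases x <;> simp_all [Bad]
    · simp
    · simp
    · have := top_l n (cfg u) (u vl) (u vc + u vcb)
      simp [cfg_add, cfg_C, cfg_F, cfg_outer vl trivial]
      rw [this]
  · exact ⟨_, _, rfl, fun u => iff_of_false
      (AA_bad (vF true (Fin.last n)) rfl (by simp)) (hdead _ (by simp) (by simp))⟩
  · exact ⟨_, _, rfl, fun u => iff_of_false
      (hdead _ (by simp) (by simp)) (hdead _ (by simp) (by simp))⟩
  · exact ⟨_, _, rfl, fun u => iff_of_false
      (hdead _ (by simp) (by simp)) (hdead _ (by simp) (by simp))⟩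
  · exact Good.of_bad _ _ (vS true (Fin.last n)) vs rfl trivial (by simp) (by simp)

lemma good_FF (m1 m2 : ℕ) (p : MPoly n) (hp : p ∈ FF n) : Good m1 m2 p := by
  rcases hp with (hp | hp) | hp
  · rcases hp with hp | hp
    · exact good_P0 m1 m2 _ p hp
    · obtain ⟨i, hi⟩ := Set.mem_iUnion.1 hp
      exact good_Pm_false m1 m2 i p hi
  · rcases hp with hp | hp
    · exact good_P0 m1 m2 _ p hp
    · obtain ⟨i, hi⟩ := Set.mem_iUnion.1 hp
      exact good_Pm_true m1 m2 i p hi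
  · exact good_GG m1 m2 p hp

end

open MVar in
/-- For `α = ℓ c̄^{m1} c^{m2} ∈ D` (so `1 + m1 + m2 ≤ 2^(2^n)`): if
`γ = ℓ c^{r1} c̄^{r2}` and `α + γ ∈ ⟨𝓕⟩` then `γ = α`. -/
theorem stmt13 (n : ℕ) (m1 m2 : ℕ) (h : 1 + m1 + m2 ≤ en n) (r1 r2 : ℕ)
    (hγ : (X vl * X vcb ^ m1 * X vc ^ m2 + X vl * X vc ^ r1 * X vcb ^ r2 : MPoly n)
      ∈ Ideal.span (FF n)) :
    (X vl * X vc ^ r1 * X vcb ^ r2 : MPoly n) = X vl * X vcb ^ m1 * X vc ^ m2 := by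
  have e1 : (X vl * X vcb ^ m1 * X vc ^ m2 : MPoly n) = monomial
      (Finsupp.single vl 1 + Finsupp.single vcb m1 + Finsupp.single vc m2) 1 := by
    simp [X, monomial_mul, monomial_pow]
  have e2 : (X vl * X vc ^ r1 * X vcb ^ r2 : MPoly n) = monomial
      (Finsupp.single vl 1 + Finsupp.single vc r1 + Finsupp.single vcb r2) 1 := by
    simp [X, monomial_mul, monomial_pow]
  have hL := LL_zero m1 m2 (FF n) (good_FF m1 m2) _ hγ 1
  rw [one_mul, e1, e2, map_add, LL_mono, LL_mono] at hL
  have hA : AA n m1 m2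
      (Finsupp.single vl 1 + Finsupp.single vcb m1 + Finsupp.single vc m2) := by
    refine ⟨?_, by simp, by simp, ?_⟩
    · intro x hx; cases x <;> simp_all [Bad]
    · simp only [cfg_add, cfg_outer vl trivial, cfg_outer vc trivial, cfg_outer vcb trivial]
      refine Or.inl ⟨by simp, ⟨by simp, by simp⟩, by simp, by simp, by simp, by simp, ?_⟩
      simp
      omega
  rw [if_pos hA] at hL
  by_cases hB : AA n m1 m2 (Finsupp.single vl 1 + Finsupp.single vc r1 + Finsupp.single vcb r2)
  · obtain ⟨_, h1, h2, _⟩ := hB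
    simp at h1 h2
    subst h1 h2
    ring
  · rw [if_neg hB] at hL
    simp at hL
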